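/- The Kronecker elliptic function satisfies the higher-order addition formula: for every n ≥ 1 and all w₁,…,w_n, u₁,…,u_n ∈ ℂ such that every argument of φ occurring lies off the lattice ℤ + τℤ, one has ∏_{i=1}^{n} φ(w_i, u_i) = ∑_{i=1}^{n} φ(w_i, ∑_{l=1}^{n} u_l) · ∏_{j≠i} φ(w_j − w_i, u_j). -/

import Mathlib

open Complex Finset Filter
open scoped BigOperators Topology

noncomputable section

/-- The lattice `ℤ + τℤ ⊂ ℂ`. -/
def lat (τ : ℂ) : Set ℂ := {w : ℂ | ∃ m n : ℤ, w = (m : ℂ) + (n : ℂ) * τ}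

/-- The odd theta function `ϑ(z|τ)`. -/
def theta (τ z : ℂ) : ℂ :=
  -∑' k : ℤ, Complex.exp ((Real.pi : ℂ) * Complex.I * τ * ((k : ℂ) + 1/2)^2
      + 2 * (Real.pi : ℂ) * Complex.I * (z + 1/2) * ((k : ℂ) + 1/2))

/-- The Kronecker elliptic function `φ(z,u) = ϑ'(0)ϑ(z+u)/(ϑ(z)ϑ(u))`. -/
def phi (τ z u : ℂ) : ℂ :=
  deriv (theta τ) 0 * theta τ (z + u) / (theta τ z * theta τ u)

/-!
As functions of `z`, both `∏ ϑ(z + w i + u i)` and the products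
`ϑ(z + w i + U) ∏_{j ≠ i} ϑ(z + w j)`, with `U = ∑ u i`, are entire with the same factors of
automorphy for the periods `1` and `τ`. A function with these factors which vanishes at all points
`-w i` is divisible by `∏ ϑ(z + w i)`, because `ϑ` has only simple zeros, located at the lattice
points; the quotient is entire with the constant factors `1` and `exp (-2πiU)`, hence an
exponential function by Liouville's theorem, hence zero as `U` is not a lattice point. So functions
with these factors are given by Lagrange interpolation at the points `-w i`, and the addition
formula is the interpolation formula for `∏ ϑ(z + w i + u i)`, evaluated at `z = 0`.

The zeros of `ϑ` are read off from Jacobi's infinite product, which has the same factors of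
automorphy: `ϑ` is divisible by the product, and again the quotient is an exponential function,
which is nonzero because the constant Fourier coefficient of the theta series is `1`.
-/

open scoped Real

section Lattice

lemma mem_lat_iff_mem_closure {τ z : ℂ} : z ∈ lat τ ↔ z ∈ AddSubgroup.closure {1, τ} := by
  simp [lat, AddSubgroup.mem_closure_pair, eq_comm]

lemma neg_mem_lat_iff {τ z : ℂ} : -z ∈ lat τ ↔ z ∈ lat τ := by
  simp only [mem_lat_iff_mem_closure, neg_mem_iff]

lemma sub_mem_lat {τ z z' : ℂ} (hz : z ∈ lat τ) (hz' : z' ∈ lat τ) : z - z' ∈ lat τ := by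
  rw [mem_lat_iff_mem_closure] at *
  exact sub_mem hz hz'

lemma mem_lat_of_exp_eq_one {τ z : ℂ} {n : ℤ} (h : exp (2 * π * I * (n * τ + z)) = 1) :
    z ∈ lat τ := by
  obtain ⟨k, hk⟩ := exp_eq_one_iff.1 h
  refine ⟨k, -n, mul_left_cancel₀ two_pi_I_ne_zero ?_⟩
  push_cast
  linear_combination hk

lemma apply_add_of_mem_lat {τ l : ℂ} {α : Type*} {f : ℂ → α} (h_one : Function.Periodic f 1)
    (h_tau : Function.Periodic f τ) (hl : l ∈ lat τ) (z : ℂ) : f (z + l) = f z := by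
  obtain ⟨m, n, rfl⟩ := hl
  rw [← add_assoc, h_tau.int_mul n, ← mul_one (m : ℂ), h_one.int_mul m]

lemma isCompact_range_of_periodic {τ : ℂ} (hτ : τ.im ≠ 0) {X : Type*} [TopologicalSpace X]
    {f : ℂ → X} (hf : Continuous f) (h_one : Function.Periodic f 1)
    (h_tau : Function.Periodic f τ) : IsCompact (Set.range f) := by
  have h_range : Set.range f =
      (fun p : ℝ × ℝ ↦ f (p.1 + p.2 * τ)) '' (Set.Icc 0 1 ×ˢ Set.Icc 0 1) := by
    refine (Set.range_subset_iff.2 fun z ↦ ?_).antisymm (Set.image_subset_iff.2 fun p _ ↦ ⟨_, rfl⟩)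
    set t : ℝ := z.im / τ.im with ht
    set s : ℝ := z.re - t * τ.re with hs
    have hz : z = s + t * τ := by
      apply Complex.ext
      · simp [hs]
      · simp [ht, hτ]
    refine ⟨(Int.fract s, Int.fract t), ⟨⟨Int.fract_nonneg s, (Int.fract_lt_one s).le⟩,
      ⟨Int.fract_nonneg t, (Int.fract_lt_one t).le⟩⟩, ?_⟩
    have h_mem : (⌊s⌋ + ⌊t⌋ * τ : ℂ) ∈ lat τ := ⟨⌊s⌋, ⌊t⌋, rfl⟩
    refine (apply_add_of_mem_lat h_one h_tau h_mem _).symm.trans (congrArg f ?_)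
    simp only [hz, Int.fract]
    push_cast
    ring
  rw [h_range]
  exact (isCompact_Icc.prod isCompact_Icc).image (by fun_prop)

end Lattice

section EntireFunctions

lemma analyticOrderAt_comp_add_const {E : Type*} [NormedAddCommGroup E] [NormedSpace ℂ E]
    (f : ℂ → E) (c z : ℂ) :
    analyticOrderAt (fun z ↦ f (z + c)) z = analyticOrderAt f (z + c) :=
  analyticOrderAt_comp_of_deriv_ne_zero (f := f) (g := (· + c)) (by fun_prop) (by simp)

lemma analyticOrderAt_mul_of_left_ne_zero {𝕜 : Type*} [NontriviallyNormedField 𝕜]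
    {f g : 𝕜 → 𝕜} {z : 𝕜} (hf : AnalyticAt 𝕜 f z) (hg : AnalyticAt 𝕜 g z) (hfz : f z ≠ 0) :
    analyticOrderAt (f * g) z = analyticOrderAt g z := by
  rw [analyticOrderAt_mul hf hg, hf.analyticOrderAt_eq_zero.2 hfz, zero_add]

lemma eq_of_mul_eq_mul_of_differentiable {f g h : ℂ → ℂ} (hf : Differentiable ℂ f)
    (hg : Differentiable ℂ g) (hh : Differentiable ℂ h) (h_ne : h ≠ 0) (h_eq : f * h = g * h) :
    f = g := by
  have h_zero : ∀ z ∈ Set.univ, (f - g) z * h z = 0 := fun z _ ↦ by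
    simpa [sub_mul, sub_eq_zero] using congrFun h_eq z
  rcases AnalyticOnNhd.eq_zero_or_eq_zero_of_mul_eq_zero (fun z _ ↦ (hf.sub hg).analyticAt z)
    (fun z _ ↦ hh.analyticAt z) h_zero isPreconnected_univ with h_sub | h_h
  · exact funext fun z ↦ sub_eq_zero.1 (h_sub z trivial)
  · exact absurd (funext fun z ↦ h_h z trivial) h_ne

lemma map_natCast_sub_map_natCast_nonneg {a b : ℕ∞} (hb : b ≠ ⊤) (hba : b ≤ a) :
    (0 : WithTop ℤ) ≤ ENat.map (↑) a - ENat.map (↑) b := by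
  lift b to ℕ using hb
  obtain rfl | ha := eq_or_ne a ⊤
  · simp
  · lift a to ℕ using ha
    have h_sub : (0 : ℤ) ≤ a - b := sub_nonneg.2 (by exact_mod_cast hba)
    exact WithTop.coe_le_coe.2 h_sub

lemma exists_differentiable_eq_mul {A B : ℂ → ℂ} (hA : Differentiable ℂ A)
    (hB : Differentiable ℂ B) (hB_ne : B ≠ 0)
    (h_order : ∀ z, analyticOrderAt B z ≤ analyticOrderAt A z) :
    ∃ g : ℂ → ℂ, Differentiable ℂ g ∧ A = g * B := by
  have hA_mer (z : ℂ) : MeromorphicAt A z := (hA.analyticAt z).meromorphicAt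
  have hB_mer (z : ℂ) : MeromorphicAt B z := (hB.analyticAt z).meromorphicAt
  have hB_top (z : ℂ) : analyticOrderAt B z ≠ ⊤ := fun h ↦
    hB_ne ((AnalyticOnNhd.analyticOrderAt_eq_top_iff_eq_zero z fun w ↦ hB.analyticAt w).1 h)
  have h_mer : MeromorphicOn (A / B) Set.univ := fun z _ ↦ (hA_mer z).div (hB_mer z)
  set g := toMeromorphicNFOn (A / B) Set.univ with hg
  have hg_diff : Differentiable ℂ g := fun z ↦ by
    refine ((meromorphicNFOn_toMeromorphicNFOn _ _
      (Set.mem_univ z)).meromorphicOrderAt_nonneg_iff_analyticAt.1 ?_).differentiableAt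
    rw [meromorphicOrderAt_toMeromorphicNFOn h_mer (Set.mem_univ z),
      meromorphicOrderAt_div (hA_mer z) (hB_mer z), (hA.analyticAt z).meromorphicOrderAt_eq,
      (hB.analyticAt z).meromorphicOrderAt_eq]
    exact map_natCast_sub_map_natCast_nonneg (hB_top z) (h_order z)
  refine ⟨g, hg_diff, ?_⟩
  refine AnalyticOnNhd.eq_of_frequently_eq (z₀ := 0) (fun z _ ↦ hA.analyticAt z)
    (fun z _ ↦ (hg_diff.mul hB).analyticAt z) (Eventually.frequently ?_)
  have hB_ev : ∀ᶠ z in 𝓝[≠] 0, B z ≠ 0 :=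
    (hB.analyticAt 0).eventually_eq_zero_or_eventually_ne_zero.resolve_left fun h ↦
      hB_top 0 (analyticOrderAt_eq_top.2 h)
  filter_upwards [h_mer.toMeromorphicNFOn_eq_self_on_nhdsNE (Set.mem_univ 0), hB_ev] with z hz hBz
  simp [hg, hz, hBz]

end EntireFunctions

section ThetaSpace

/-- The entire functions `f` with factors of automorphy `a` and `b`, that is
`f (z + 1) = a z * f z` and `f (z + τ) = b z * f z`: the theta functions, in the general sense,
of the lattice `ℤ + τℤ`. -/
def thetaSpace (τ : ℂ) (a b : ℂ → ℂ) : Submodule ℂ (ℂ → ℂ) where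
  carrier := {f | Differentiable ℂ f ∧ (∀ z, f (z + 1) = a z * f z) ∧
    ∀ z, f (z + τ) = b z * f z}
  add_mem' hf hg := ⟨hf.1.add hg.1, fun z ↦ by simp [hf.2.1, hg.2.1, mul_add],
    fun z ↦ by simp [hf.2.2, hg.2.2, mul_add]⟩
  zero_mem' := ⟨differentiable_const 0, by simp, by simp⟩
  smul_mem' c f hf := ⟨hf.1.const_smul c, fun z ↦ by simp [hf.2.1, mul_left_comm],
    fun z ↦ by simp [hf.2.2, mul_left_comm]⟩

variable {τ : ℂ} {a b : ℂ → ℂ} {f : ℂ → ℂ}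

lemma mul_mem_thetaSpace {a' b' f' : ℂ → ℂ} (hf : f ∈ thetaSpace τ a b)
    (hf' : f' ∈ thetaSpace τ a' b') : f * f' ∈ thetaSpace τ (a * a') (b * b') :=
  ⟨hf.1.mul hf'.1, fun z ↦ by simp [hf.2.1, hf'.2.1, mul_mul_mul_comm],
    fun z ↦ by simp [hf.2.2, hf'.2.2, mul_mul_mul_comm]⟩

lemma prod_mem_thetaSpace {ι : Type*} (s : Finset ι) {a b f : ι → ℂ → ℂ}
    (hf : ∀ i ∈ s, f i ∈ thetaSpace τ (a i) (b i)) :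
    ∏ i ∈ s, f i ∈ thetaSpace τ (∏ i ∈ s, a i) (∏ i ∈ s, b i) := by
  classical
  induction s using Finset.induction_on with
  | empty => exact ⟨differentiable_const 1, by simp, by simp⟩
  | insert i s hi ih =>
    simp only [prod_insert hi]
    exact mul_mem_thetaSpace (hf i (mem_insert_self i s))
      (ih fun j hj ↦ hf j (mem_insert_of_mem hj))

lemma comp_add_const_mem_thetaSpace (hf : f ∈ thetaSpace τ a b) (c : ℂ) :
    (fun z ↦ f (z + c)) ∈ thetaSpace τ (fun z ↦ a (z + c)) (fun z ↦ b (z + c)) :=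
  ⟨hf.1.comp (differentiable_id.add_const c), fun z ↦ by simp [add_right_comm z 1, hf.2.1],
    fun z ↦ by simp [add_right_comm z τ, hf.2.2]⟩

lemma analyticOrderAt_add_of_mem_lat (ha : Differentiable ℂ a) (ha_ne : ∀ z, a z ≠ 0)
    (hb : Differentiable ℂ b) (hb_ne : ∀ z, b z ≠ 0) (hf : f ∈ thetaSpace τ a b) {l : ℂ}
    (hl : l ∈ lat τ) (z : ℂ) : analyticOrderAt f (z + l) = analyticOrderAt f z := by
  have h_add {c : ℂ} {e : ℂ → ℂ} (he : Differentiable ℂ e) (he_ne : ∀ z, e z ≠ 0)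
      (h_eq : ∀ z, f (z + c) = e z * f z) : Function.Periodic (analyticOrderAt f) c := fun z ↦ by
    rw [← analyticOrderAt_comp_add_const, funext h_eq]
    exact analyticOrderAt_mul_of_left_ne_zero (he.analyticAt z) (hf.1.analyticAt z) (he_ne z)
  exact apply_add_of_mem_lat (h_add ha ha_ne hf.2.1) (h_add hb hb_ne hf.2.2) hl z

lemma apply_add_eq_zero_iff_of_mem_lat (ha_ne : ∀ z, a z ≠ 0) (hb_ne : ∀ z, b z ≠ 0)
    (hf : f ∈ thetaSpace τ a b) {l : ℂ} (hl : l ∈ lat τ) (z : ℂ) : f (z + l) = 0 ↔ f z = 0 :=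
  (apply_add_of_mem_lat (f := (f · = 0)) (fun z ↦ by simp [hf.2.1, ha_ne])
    (fun z ↦ by simp [hf.2.2, hb_ne]) hl z).to_iff

lemma exists_mem_thetaSpace_eq_mul {A B : ℂ → ℂ} {ε : ℂ} (hA : A ∈ thetaSpace τ a (ε • b))
    (hB : B ∈ thetaSpace τ a b) (hB_ne : B ≠ 0)
    (h_order : ∀ z, analyticOrderAt B z ≤ analyticOrderAt A z) :
    ∃ g ∈ thetaSpace τ 1 (fun _ ↦ ε), A = g * B := by
  obtain ⟨g, hg, rfl⟩ := exists_differentiable_eq_mul hA.1 hB.1 hB_ne h_order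
  have h_add {c δ : ℂ} {e : ℂ → ℂ} (h_gB : ∀ z, (g * B) (z + c) = δ * e z * (g * B) z)
      (hB_eq : ∀ z, B (z + c) = e z * B z) (z : ℂ) : g (z + c) = δ * g z := by
    refine congrFun (eq_of_mul_eq_mul_of_differentiable (f := fun z ↦ g (z + c))
      (g := fun z ↦ δ * g z) (h := fun z ↦ B (z + c)) (hg.comp (differentiable_id.add_const c))
      (hg.const_mul δ) (hB.1.comp (differentiable_id.add_const c))
      (fun h_zero ↦ hB_ne (funext fun w ↦ by simpa using congrFun h_zero (w - c)))
      (funext fun w ↦ (h_gB w).trans ?_)) z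
    simp only [Pi.mul_apply, hB_eq]
    ring
  exact ⟨g, ⟨hg, h_add (δ := 1) (by simpa using hA.2.1) hB.2.1, h_add hA.2.2 hB.2.2⟩, rfl⟩

end ThetaSpace

section ConstantMultipliers

variable {τ U : ℂ} {g : ℂ → ℂ}

lemma exists_eq_mul_exp_of_mem_thetaSpace (hτ : τ.im ≠ 0)
    (hg : g ∈ thetaSpace τ 1 fun _ ↦ exp (2 * π * I * U)) :
    ∃ C β : ℂ, ∀ z, g z = C * exp (β * z) := by
  -- This choice of `β` makes `‖F‖` doubly periodic.
  set β : ℝ := -(2 * π * U.im) / τ.im with hβ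
  set F : ℂ → ℂ := fun z ↦ g z * exp (I * β * z) with hF
  have hF_diff : Differentiable ℂ F := hg.1.mul (by fun_prop)
  have h_norm (z : ℂ) : ‖F z‖ = ‖g z‖ * Real.exp (-(β * z.im)) := by
    simp [hF, Complex.norm_exp]
  have h_one : Function.Periodic (fun z ↦ ‖F z‖) 1 := fun z ↦ by
    simp [h_norm, hg.2.1]
  have h_tau : Function.Periodic (fun z ↦ ‖F z‖) τ := fun z ↦ by
    have h_exp : ‖exp (2 * π * I * U)‖ * Real.exp (-(β * τ.im)) = 1 := by
      simp [Complex.norm_exp, ← Real.exp_add, hβ, div_mul_cancel₀ _ hτ]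
    simp only [h_norm, hg.2.2, norm_mul, add_im, mul_add, neg_add, Real.exp_add]
    linear_combination ‖g z‖ * Real.exp (-(β * z.im)) * h_exp
  obtain ⟨M, hM⟩ := (isCompact_range_of_periodic hτ hF_diff.continuous.norm h_one
    h_tau).isBounded.exists_norm_le
  have h_bdd : Bornology.IsBounded (Set.range F) := isBounded_iff_forall_norm_le.2
    ⟨M, Set.forall_mem_range.2 fun z ↦ by simpa using hM _ (Set.mem_range_self z)⟩
  refine ⟨F 0, -(I * β), fun z ↦ ?_⟩
  rw [← hF_diff.apply_eq_apply_of_bounded h_bdd z 0]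
  simp [hF, mul_assoc, ← Complex.exp_add]

lemma eq_zero_of_mem_thetaSpace (hτ : τ.im ≠ 0) (hU : U ∉ lat τ)
    (hg : g ∈ thetaSpace τ 1 fun _ ↦ exp (2 * π * I * U)) : g = 0 := by
  obtain ⟨C, β, h⟩ := exists_eq_mul_exp_of_mem_thetaSpace hτ hg
  suffices hC : C = 0 from funext fun z ↦ by simp [h, hC]
  by_contra hC
  have h_one : exp β = 1 := mul_left_cancel₀ hC <| by simpa [h] using hg.2.1 0
  have h_tau : exp (β * τ) = exp (2 * π * I * U) := mul_left_cancel₀ hC <| by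
    simpa [h, mul_comm] using hg.2.2 0
  obtain ⟨k, hk⟩ := Complex.exp_eq_one_iff.1 h_one
  obtain ⟨l, hl⟩ := Complex.exp_eq_exp_iff_exists_int.1 h_tau
  refine hU ⟨-l, k, mul_left_cancel₀ two_pi_I_ne_zero ?_⟩
  push_cast
  linear_combination τ * hk - hl

end ConstantMultipliers

section Theta

variable {τ : ℂ}

lemma theta_eq_jacobiTheta₂ (τ z : ℂ) : theta τ z =
    -(exp (π * I * τ / 4 + π * I * (z + 1 / 2)) * jacobiTheta₂ (z + 1 / 2 + τ / 2) τ) := by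
  rw [theta, jacobiTheta₂, ← tsum_mul_left]
  congr 1
  refine tsum_congr fun k ↦ ?_
  rw [jacobiTheta₂_term, ← Complex.exp_add]
  congr 1
  ring

lemma differentiable_theta (hτ : 0 < τ.im) : Differentiable ℂ (theta τ) := by
  rw [funext (theta_eq_jacobiTheta₂ τ)]
  have h_jacobi : Differentiable ℂ fun z ↦ jacobiTheta₂ (z + 1 / 2 + τ / 2) τ := fun z ↦
    DifferentiableAt.comp (g := fun y ↦ jacobiTheta₂ y τ) z
      (differentiableAt_jacobiTheta₂_fst _ hτ) (by fun_prop)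
  fun_prop

lemma theta_neg (τ z : ℂ) : theta τ (-z) = -theta τ z := by
  rw [theta, theta, neg_inj, ← tsum_neg, ← (Equiv.subLeft (-1 : ℤ)).tsum_eq]
  refine tsum_congr fun k ↦ ?_
  rw [← exp_add_pi_mul_I, exp_eq_exp_iff_exists_int]
  refine ⟨-k - 1, ?_⟩
  simp only [Equiv.subLeft_apply]
  push_cast
  ring

lemma theta_zero (τ : ℂ) : theta τ 0 = 0 :=
  self_eq_neg.1 <| by simpa using theta_neg τ 0

/-- The factor of automorphy of `ϑ(·|τ)` for the period `τ`. -/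
def thetaMultiplier (τ z : ℂ) : ℂ := -exp (-(π * I * τ) - 2 * π * I * z)

lemma differentiable_thetaMultiplier (τ : ℂ) : Differentiable ℂ (thetaMultiplier τ) := by
  unfold thetaMultiplier
  fun_prop

lemma thetaMultiplier_ne_zero (τ z : ℂ) : thetaMultiplier τ z ≠ 0 :=
  neg_ne_zero.2 (Complex.exp_ne_zero _)

lemma thetaMultiplier_add (τ z u : ℂ) :
    thetaMultiplier τ (z + u) = exp (-(2 * π * I * u)) * thetaMultiplier τ z := by
  rw [thetaMultiplier, thetaMultiplier, mul_neg, ← Complex.exp_add]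
  ring_nf

lemma theta_mem_thetaSpace (hτ : 0 < τ.im) :
    theta τ ∈ thetaSpace τ (-1) (thetaMultiplier τ) := by
  refine ⟨differentiable_theta hτ, fun z ↦ ?_, fun z ↦ ?_⟩
  · have h_arg : π * I * τ / 4 + π * I * (z + 1 + 1 / 2) =
        (π * I * τ / 4 + π * I * (z + 1 / 2)) + π * I := by ring
    have h_jacobi := jacobiTheta₂_add_left (z + 1 / 2 + τ / 2) τ
    rw [theta_eq_jacobiTheta₂, theta_eq_jacobiTheta₂, h_arg, exp_add_pi_mul_I, ← h_jacobi]
    simp only [Pi.neg_apply, Pi.one_apply, neg_one_mul]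
    ring_nf
  · have h_arg : z + τ + 1 / 2 + τ / 2 = (z + 1 / 2 + τ / 2) + τ := by ring
    have h_exp : exp (π * I * τ / 4 + π * I * (z + τ + 1 / 2)) *
        exp (-π * I * (τ + 2 * (z + 1 / 2 + τ / 2))) =
          thetaMultiplier τ z * exp (π * I * τ / 4 + π * I * (z + 1 / 2)) := by
      rw [thetaMultiplier, ← exp_sub_pi_mul_I, ← Complex.exp_add, ← Complex.exp_add]
      ring_nf
    rw [theta_eq_jacobiTheta₂, theta_eq_jacobiTheta₂, h_arg, jacobiTheta₂_add_left']
    linear_combination (-jacobiTheta₂ (z + 1 / 2 + τ / 2) τ) * h_exp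

lemma integral_jacobiTheta₂_term (n : ℤ) (τ : ℂ) :
    ∫ x in (0 : ℝ)..1, jacobiTheta₂_term n x τ = if n = 0 then 1 else 0 := by
  split_ifs with hn
  · simp [jacobiTheta₂_term, hn]
  · have h_ne : 2 * π * I * n ≠ 0 := mul_ne_zero two_pi_I_ne_zero (by exact_mod_cast hn)
    have h_term (x : ℝ) : jacobiTheta₂_term n x τ =
        exp (π * I * n ^ 2 * τ) * exp (2 * π * I * n * x) := by
      rw [jacobiTheta₂_term, add_comm, Complex.exp_add]
    have h_period : exp (2 * π * I * n) = 1 := exp_eq_one_iff.2 ⟨n, by ring⟩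
    simp [h_term, integral_exp_mul_complex h_ne, h_period]

lemma integral_jacobiTheta₂ (hτ : 0 < τ.im) : ∫ x in (0 : ℝ)..1, jacobiTheta₂ x τ = 1 := by
  have h_sum := intervalIntegral.hasSum_integral_of_dominated_convergence
    (μ := MeasureTheory.volume) (a := 0) (b := 1)
    (F := fun (n : ℤ) (x : ℝ) ↦ jacobiTheta₂_term n x τ) (f := fun x ↦ jacobiTheta₂ x τ)
    (fun n _ ↦ ‖jacobiTheta₂_term n 0 τ‖)
    (fun n ↦ by unfold jacobiTheta₂_term; fun_prop)
    (fun n ↦ .of_forall fun x _ ↦ by simp [norm_jacobiTheta₂_term])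
    (.of_forall fun x _ ↦ ((summable_jacobiTheta₂_term_iff 0 τ).2 hτ).norm)
    (by simp)
    (.of_forall fun x _ ↦ hasSum_jacobiTheta₂_term x hτ)
  simp only [integral_jacobiTheta₂_term] at h_sum
  exact h_sum.unique (hasSum_ite_eq 0 1)

lemma theta_ne_zero (hτ : 0 < τ.im) : theta τ ≠ 0 := fun h_zero ↦ by
  have h_jacobi (z : ℂ) : jacobiTheta₂ z τ = 0 := by
    have h := congrFun h_zero (z - 1 / 2 - τ / 2)
    rw [theta_eq_jacobiTheta₂, show z - 1 / 2 - τ / 2 + 1 / 2 + τ / 2 = z by ring] at h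
    simpa using h
  simpa [h_jacobi] using integral_jacobiTheta₂ hτ

end Theta

section Product

/-- The `q`-Pochhammer symbol `(x; q)_∞`, with the factors written in the form `1 + a n` in which
Mathlib states its results on infinite products. -/
def qPochhammer (q x : ℂ) : ℂ := ∏' n : ℕ, (1 + -(q ^ n * x))

variable {q : ℂ}

lemma summable_norm_qPochhammer (hq : ‖q‖ < 1) (x : ℂ) :
    Summable fun n : ℕ ↦ ‖-(q ^ n * x)‖ := by
  simp only [norm_neg, norm_mul, norm_pow]
  exact (summable_geometric_of_lt_one (norm_nonneg _) hq).mul_right _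

lemma differentiable_qPochhammer (hq : ‖q‖ < 1) : Differentiable ℂ (qPochhammer q) := by
  have h_prod : HasProdLocallyUniformlyOn (fun (n : ℕ) (x : ℂ) ↦ 1 + -(q ^ n * x))
      (qPochhammer q) Set.univ := by
    refine hasProdLocallyUniformlyOn_of_forall_compact isOpen_univ fun K _ hK ↦ ?_
    obtain ⟨M, hM⟩ := hK.isBounded.exists_norm_le
    refine ((summable_geometric_of_lt_one (norm_nonneg _) hq).mul_right
      M).hasProdUniformlyOn_nat_one_add hK (.of_forall fun n x hx ↦ ?_) (fun _ ↦ by fun_prop)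
    simp only [norm_neg, norm_mul, norm_pow]
    gcongr
    exact hM x hx
  refine differentiableOn_univ.1 (h_prod.differentiableOn (.of_forall fun s ↦ ?_) isOpen_univ)
  simpa [Finset.prod_fn] using DifferentiableOn.finsetProd fun _ _ ↦ by fun_prop

lemma exists_pow_mul_eq_one_of_qPochhammer_eq_zero (hq : ‖q‖ < 1) {x : ℂ}
    (h : qPochhammer q x = 0) : ∃ n : ℕ, q ^ n * x = 1 := by
  by_contra! h_ne
  refine tprod_one_add_ne_zero_of_summable (fun n ↦ ?_) (summable_norm_qPochhammer hq x) h
  rw [← sub_eq_add_neg, sub_ne_zero]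
  exact (h_ne n).symm

lemma qPochhammer_eq_mul (hq : ‖q‖ < 1) (x : ℂ) :
    qPochhammer q x = (1 - x) * qPochhammer q (q * x) := by
  have h_multipliable := multipliable_one_add_of_summable (summable_norm_qPochhammer hq (q * x))
  have h_pow (n : ℕ) : q ^ n * (q * x) = q ^ (n + 1) * x := by ring
  simp only [h_pow] at h_multipliable
  simp only [qPochhammer, h_pow]
  rw [tprod_eq_zero_mul' (f := fun n : ℕ ↦ 1 + -(q ^ n * x)) h_multipliable, pow_zero, one_mul,
    sub_eq_add_neg]

/-- The product side of Jacobi's triple product identity for `ϑ(z|τ)`, up to a constant factor: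
`exp (-πiz) (x; q)_∞ (q/x; q)_∞` with `x = exp (2πiz)` and `q = exp (2πiτ)`. -/
def thetaProduct (τ z : ℂ) : ℂ :=
  exp (-(π * I * z)) * (qPochhammer (exp (2 * π * I * τ)) (exp (2 * π * I * z)) *
    qPochhammer (exp (2 * π * I * τ)) (exp (2 * π * I * τ) * exp (-(2 * π * I * z))))

variable {τ : ℂ}

lemma norm_exp_two_pi_I_mul_lt_one (hτ : 0 < τ.im) : ‖exp (2 * π * I * τ)‖ < 1 := by
  simpa [Complex.norm_exp] using mul_pos Real.two_pi_pos hτ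

lemma thetaProduct_mem_thetaSpace (hτ : 0 < τ.im) :
    thetaProduct τ ∈ thetaSpace τ (-1) (thetaMultiplier τ) := by
  have hq := norm_exp_two_pi_I_mul_lt_one hτ
  have h_diff := differentiable_qPochhammer hq
  refine ⟨by unfold thetaProduct; fun_prop, fun z ↦ ?_, fun z ↦ ?_⟩
  · have h_half : exp (-(π * I * (z + 1))) = -exp (-(π * I * z)) := by
      rw [← exp_sub_pi_mul_I]
      ring_nf
    have h_exp : exp (2 * π * I * (z + 1)) = exp (2 * π * I * z) := by
      rw [mul_add, mul_one, Complex.exp_add, exp_two_pi_mul_I, mul_one]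
    simp only [thetaProduct, h_half, Complex.exp_neg (2 * _ * _ * _), h_exp]
    simp
  · set q := exp (2 * π * I * τ) with hq_def
    set x := exp (2 * π * I * z) with hx_def
    have hx : x ≠ 0 := Complex.exp_ne_zero _
    have hq_ne : q ≠ 0 := Complex.exp_ne_zero _
    have h_half :
        exp (-(π * I * (z + τ))) = -thetaMultiplier τ z * x * exp (-(π * I * z)) := by
      rw [thetaMultiplier, neg_neg, hx_def, ← Complex.exp_add, ← Complex.exp_add]
      ring_nf
    have h_exp : exp (2 * π * I * (z + τ)) = q * x := by
      rw [hq_def, hx_def, ← Complex.exp_add]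
      ring_nf
    have h_inv : q * (q * x)⁻¹ = x⁻¹ := by field_simp
    simp only [thetaProduct, Complex.exp_neg (2 * _ * _ * _), ← hq_def, ← hx_def, h_exp, h_inv,
      qPochhammer_eq_mul hq x⁻¹, qPochhammer_eq_mul hq x, h_half]
    field_simp
    ring

lemma mem_lat_of_thetaProduct_eq_zero (hτ : 0 < τ.im) {z : ℂ} (h : thetaProduct τ z = 0) :
    z ∈ lat τ := by
  have hq := norm_exp_two_pi_I_mul_lt_one hτ
  rcases mul_eq_zero.1 ((mul_eq_zero_iff_left (Complex.exp_ne_zero _)).1 h) with h | h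
  · obtain ⟨n, hn⟩ := exists_pow_mul_eq_one_of_qPochhammer_eq_zero hq h
    rw [← Complex.exp_nat_mul, ← Complex.exp_add] at hn
    refine mem_lat_of_exp_eq_one (n := n) ?_
    rw [← hn]
    push_cast
    ring_nf
  · obtain ⟨n, hn⟩ := exists_pow_mul_eq_one_of_qPochhammer_eq_zero hq h
    rw [← Complex.exp_nat_mul, ← Complex.exp_add, ← Complex.exp_add] at hn
    refine neg_mem_lat_iff.1 (mem_lat_of_exp_eq_one (n := n + 1) ?_)
    rw [← hn]
    push_cast
    ring_nf

lemma qPochhammer_self_ne_zero (hq : ‖q‖ < 1) : qPochhammer q q ≠ 0 := fun h ↦ by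
  obtain ⟨n, hn⟩ := exists_pow_mul_eq_one_of_qPochhammer_eq_zero hq h
  have h_norm : ‖q‖ ^ (n + 1) = 1 := by rw [← norm_pow, pow_succ, hn, norm_one]
  exact (pow_lt_one₀ (norm_nonneg q) hq n.succ_ne_zero).ne h_norm

lemma analyticOrderAt_thetaProduct_zero (hτ : 0 < τ.im) :
    analyticOrderAt (thetaProduct τ) 0 = 1 := by
  have hq := norm_exp_two_pi_I_mul_lt_one hτ
  have h_diff := differentiable_qPochhammer hq
  set q := exp (2 * π * I * τ)
  set E : ℂ → ℂ := fun z ↦ exp (-(π * I * z)) * (qPochhammer q (q * exp (2 * π * I * z)) *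
    qPochhammer q (q * exp (-(2 * π * I * z)))) with hE
  have hE_an : AnalyticAt ℂ E 0 := Differentiable.analyticAt (by fun_prop) 0
  have hE_zero : E 0 ≠ 0 := by simp [hE, qPochhammer_self_ne_zero hq]
  have h_factor : thetaProduct τ = E * fun z ↦ 1 - exp (2 * π * I * z) := funext fun z ↦ by
    rw [thetaProduct, qPochhammer_eq_mul hq, Pi.mul_apply, hE]
    ring
  have h_deriv : HasDerivAt (fun z ↦ 1 - exp (2 * π * I * z)) (-(2 * π * I)) 0 := by
    simpa using ((hasDerivAt_id (0 : ℂ)).const_mul (2 * π * I)).cexp.const_sub 1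
  have h_an : AnalyticAt ℂ (fun z ↦ 1 - exp (2 * π * I * z)) 0 := by fun_prop
  rw [h_factor, analyticOrderAt_mul_of_left_ne_zero hE_an h_an hE_zero]
  refine h_an.analyticOrderAt_eq_one_of_zero_deriv_ne_zero (by simp) ?_
  rw [h_deriv.deriv]
  exact neg_ne_zero.2 two_pi_I_ne_zero

end Product

section ThetaZeros

variable {τ : ℂ}

lemma analyticOrderAt_add_of_mem_thetaSpace_thetaMultiplier {f : ℂ → ℂ}
    (hf : f ∈ thetaSpace τ (-1) (thetaMultiplier τ)) {l : ℂ} (hl : l ∈ lat τ) (z : ℂ) :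
    analyticOrderAt f (z + l) = analyticOrderAt f z :=
  analyticOrderAt_add_of_mem_lat (differentiable_const (-1)) (by simp)
    (differentiable_thetaMultiplier τ) (thetaMultiplier_ne_zero τ) hf hl z

lemma exists_theta_eq_mul_thetaProduct (hτ : 0 < τ.im) :
    ∃ E : ℂ → ℂ, Differentiable ℂ E ∧ (∀ z, E z ≠ 0) ∧ theta τ = E * thetaProduct τ := by
  have h_theta := theta_mem_thetaSpace hτ
  have h_prod := thetaProduct_mem_thetaSpace hτ
  have h_order_zero := analyticOrderAt_thetaProduct_zero hτ
  have h_order (z : ℂ) : analyticOrderAt (thetaProduct τ) z ≤ analyticOrderAt (theta τ) z := by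
    by_cases hz : z ∈ lat τ
    · rw [← zero_add z, analyticOrderAt_add_of_mem_thetaSpace_thetaMultiplier h_prod hz,
        analyticOrderAt_add_of_mem_thetaSpace_thetaMultiplier h_theta hz, h_order_zero,
        Order.one_le_iff_ne_zero]
      exact fun h ↦ (h_theta.1.analyticAt 0).analyticOrderAt_eq_zero.1 h (theta_zero τ)
    · rw [(h_prod.1.analyticAt z).analyticOrderAt_eq_zero.2
        (mt (mem_lat_of_thetaProduct_eq_zero hτ) hz)]
      exact zero_le
  have h_prod_ne : thetaProduct τ ≠ 0 := fun h ↦ by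
    simp [h, analyticOrderAt_eq_top.2] at h_order_zero
  obtain ⟨g, hg, h_eq⟩ := exists_mem_thetaSpace_eq_mul (ε := exp (2 * π * I * 0))
    (by simpa using h_theta) h_prod h_prod_ne h_order
  obtain ⟨C, β, hCβ⟩ := exists_eq_mul_exp_of_mem_thetaSpace hτ.ne' hg
  refine ⟨g, hg.1, fun z ↦ ?_, h_eq⟩
  have hC : C ≠ 0 := fun hC ↦ theta_ne_zero hτ <| by
    ext w
    simp [h_eq, hCβ, hC]
  simp [hCβ, hC]

lemma analyticOrderAt_theta_of_mem_lat (hτ : 0 < τ.im) {z : ℂ} (hz : z ∈ lat τ) :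
    analyticOrderAt (theta τ) z = 1 := by
  obtain ⟨E, hE, hE_ne, h_eq⟩ := exists_theta_eq_mul_thetaProduct hτ
  have h_prod := thetaProduct_mem_thetaSpace hτ
  rw [h_eq, analyticOrderAt_mul_of_left_ne_zero (hE.analyticAt z) (h_prod.1.analyticAt z) (hE_ne z),
    ← zero_add z, analyticOrderAt_add_of_mem_thetaSpace_thetaMultiplier h_prod hz,
    analyticOrderAt_thetaProduct_zero hτ]

lemma theta_eq_zero_iff (hτ : 0 < τ.im) {z : ℂ} : theta τ z = 0 ↔ z ∈ lat τ := by
  refine ⟨fun h ↦ ?_, fun hz ↦ ?_⟩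
  · obtain ⟨E, -, hE_ne, h_eq⟩ := exists_theta_eq_mul_thetaProduct hτ
    rw [h_eq, Pi.mul_apply, mul_eq_zero_iff_left (hE_ne z)] at h
    exact mem_lat_of_thetaProduct_eq_zero hτ h
  · by_contra h_ne
    have h_order := analyticOrderAt_theta_of_mem_lat hτ hz
    rw [((differentiable_theta hτ).analyticAt z).analyticOrderAt_eq_zero.2 h_ne] at h_order
    exact zero_ne_one h_order

lemma theta_apply_ne_zero (hτ : 0 < τ.im) {z : ℂ} (hz : z ∉ lat τ) : theta τ z ≠ 0 :=
  mt (theta_eq_zero_iff hτ).1 hz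

end ThetaZeros

section Interpolation

/-- The entire functions with the factors of automorphy of `z ↦ ∏ i ∈ s, ϑ(z - a i)`, the one for
the period `τ` being twisted by `exp (-2πiU)`. -/
def twistedThetaSpace {ι : Type*} (τ : ℂ) (s : Finset ι) (a : ι → ℂ) (U : ℂ) :
    Submodule ℂ (ℂ → ℂ) :=
  thetaSpace τ (∏ _i ∈ s, -1)
    (exp (-(2 * π * I * U)) • ∏ i ∈ s, fun z ↦ thetaMultiplier τ (z - a i))

/-- The analogue for theta functions of the Lagrange basis polynomial `Lagrange.basis s a i`. -/
def thetaLagrangeBasis {ι : Type*} [DecidableEq ι] (τ : ℂ) (s : Finset ι) (a : ι → ℂ) (U : ℂ)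
    (i : ι) (z : ℂ) : ℂ :=
  theta τ (z - a i + U) / theta τ U *
    ∏ j ∈ s.erase i, theta τ (z - a j) / theta τ (a i - a j)

variable {ι : Type*} {τ U : ℂ} {s : Finset ι} {a : ι → ℂ}

lemma theta_sub_add_mem_thetaSpace (hτ : 0 < τ.im) (c u : ℂ) :
    (fun z ↦ theta τ (z - c + u)) ∈
      thetaSpace τ (-1) (exp (-(2 * π * I * u)) • fun z ↦ thetaMultiplier τ (z - c)) := by
  convert comp_add_const_mem_thetaSpace (theta_mem_thetaSpace hτ) (u - c) using 1
  · congr 1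
    ext z
    rw [Pi.smul_apply, smul_eq_mul, ← thetaMultiplier_add, sub_add_eq_add_sub, add_sub_assoc]
  · ext z
    rw [sub_add_eq_add_sub, add_sub_assoc]

lemma prod_theta_mem_twistedThetaSpace (hτ : 0 < τ.im) (s : Finset ι) (a u : ι → ℂ) :
    ∏ i ∈ s, (fun z ↦ theta τ (z - a i + u i)) ∈ twistedThetaSpace τ s a (∑ i ∈ s, u i) := by
  convert prod_mem_thetaSpace s fun i _ ↦ theta_sub_add_mem_thetaSpace hτ (a i) (u i) using 1
  rw [twistedThetaSpace, mul_sum, ← sum_neg_distrib, exp_sum]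
  congr 1
  ext z
  simp [prod_mul_distrib]

lemma thetaLagrangeBasis_mem_twistedThetaSpace [DecidableEq ι] (hτ : 0 < τ.im) (U : ℂ)
    (a : ι → ℂ) {i : ι} (hi : i ∈ s) :
    thetaLagrangeBasis τ s a U i ∈ twistedThetaSpace τ s a U := by
  have h_mem := prod_theta_mem_twistedThetaSpace hτ s a (Pi.single i U)
  rw [sum_pi_single', if_pos hi] at h_mem
  convert Submodule.smul_mem _ ((theta τ U)⁻¹ * ∏ j ∈ s.erase i, (theta τ (a i - a j))⁻¹) h_mem
  ext z
  have h_erase : ∏ j ∈ s.erase i, theta τ (z - a j + Pi.single (M := fun _ ↦ ℂ) i U j) =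
      ∏ j ∈ s.erase i, theta τ (z - a j) :=
    prod_congr rfl fun j hj ↦ by rw [Pi.single_eq_of_ne (ne_of_mem_erase hj), add_zero]
  rw [Pi.smul_apply, prod_apply, ← mul_prod_erase s _ hi, h_erase, Pi.single_eq_same,
    thetaLagrangeBasis, smul_eq_mul]
  simp only [div_eq_mul_inv, prod_mul_distrib]
  ring

lemma thetaLagrangeBasis_self [DecidableEq ι] (hτ : 0 < τ.im) (hU : U ∉ lat τ) {i : ι}
    (ha : ∀ j ∈ s, i ≠ j → a i - a j ∉ lat τ) : thetaLagrangeBasis τ s a U i (a i) = 1 := by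
  have h_erase : ∏ j ∈ s.erase i, theta τ (a i - a j) / theta τ (a i - a j) = 1 :=
    prod_eq_one fun j hj ↦ div_self <| theta_apply_ne_zero hτ <|
      ha j (mem_of_mem_erase hj) (ne_of_mem_erase hj).symm
  rw [thetaLagrangeBasis, h_erase, sub_self, zero_add, div_self (theta_apply_ne_zero hτ hU),
    one_mul]

lemma thetaLagrangeBasis_of_ne [DecidableEq ι] {i j : ι} (hj : j ∈ s) (hij : i ≠ j) :
    thetaLagrangeBasis τ s a U i (a j) = 0 := by
  rw [thetaLagrangeBasis, prod_eq_zero (mem_erase.2 ⟨hij.symm, hj⟩) (by simp [theta_zero]),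
    mul_zero]

lemma analyticOrderAt_prod_theta_of_mem_lat (hτ : 0 < τ.im)
    (ha : ∀ i ∈ s, ∀ j ∈ s, i ≠ j → a i - a j ∉ lat τ) {k : ι} (hk : k ∈ s) {z : ℂ}
    (hz : z - a k ∈ lat τ) : analyticOrderAt (∏ i ∈ s, fun z ↦ theta τ (z - a i)) z = 1 := by
  classical
  have h_an (i : ι) : AnalyticAt ℂ (fun z ↦ theta τ (z - a i)) z :=
    ((differentiable_theta hτ).comp (differentiable_id.sub_const _)).analyticAt z
  have h_order : analyticOrderAt (fun z ↦ theta τ (z - a k)) z = 1 := by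
    rw [← analyticOrderAt_theta_of_mem_lat hτ hz]
    exact analyticOrderAt_comp_add_const (theta τ) (-a k) z
  have h_erase : (∏ i ∈ s.erase k, fun z ↦ theta τ (z - a i)) z ≠ 0 := by
    rw [prod_apply, prod_ne_zero_iff]
    intro i hi h_zero
    refine ha i (mem_of_mem_erase hi) k hk (ne_of_mem_erase hi) ?_
    simpa using sub_mem_lat hz ((theta_eq_zero_iff hτ).1 h_zero)
  rw [← prod_erase_mul s _ hk, analyticOrderAt_mul_of_left_ne_zero
    (Finset.analyticAt_prod _ fun i _ ↦ h_an i) (h_an k) h_erase, h_order]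

lemma apply_add_eq_zero_iff_of_mem_twistedThetaSpace {f : ℂ → ℂ}
    (hf : f ∈ twistedThetaSpace τ s a U) {l : ℂ} (hl : l ∈ lat τ) (z : ℂ) :
    f (z + l) = 0 ↔ f z = 0 :=
  apply_add_eq_zero_iff_of_mem_lat (fun z ↦ by simp)
    (fun z ↦ by simp [prod_ne_zero_iff, thetaMultiplier_ne_zero]) hf hl z

lemma eq_zero_of_mem_twistedThetaSpace (hτ : 0 < τ.im) (hU : U ∉ lat τ)
    (ha : ∀ i ∈ s, ∀ j ∈ s, i ≠ j → a i - a j ∉ lat τ) {f : ℂ → ℂ}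
    (hf : f ∈ twistedThetaSpace τ s a U) (hf_zero : ∀ i ∈ s, f (a i) = 0) : f = 0 := by
  set B : ℂ → ℂ := ∏ i ∈ s, fun z ↦ theta τ (z - a i) with hB_def
  have hB : B ∈ thetaSpace τ (∏ _i ∈ s, -1) (∏ i ∈ s, fun z ↦ thetaMultiplier τ (z - a i)) := by
    simpa [twistedThetaSpace] using prod_theta_mem_twistedThetaSpace hτ s a 0
  have h_of_lat (z : ℂ) (hz : ∃ k ∈ s, z - a k ∈ lat τ) : analyticOrderAt B z = 1 ∧ f z = 0 := by
    obtain ⟨k, hk, hzk⟩ := hz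
    refine ⟨analyticOrderAt_prod_theta_of_mem_lat hτ ha hk hzk, ?_⟩
    rw [← add_sub_cancel (a k) z, apply_add_eq_zero_iff_of_mem_twistedThetaSpace hf hzk,
      hf_zero k hk]
  have h_of_not_lat (z : ℂ) (hz : ¬∃ k ∈ s, z - a k ∈ lat τ) : analyticOrderAt B z = 0 := by
    rw [AnalyticAt.analyticOrderAt_eq_zero (hB.1.analyticAt z), hB_def, prod_apply]
    exact prod_ne_zero_iff.2 fun i hi h_zero ↦ hz ⟨i, hi, (theta_eq_zero_iff hτ).1 h_zero⟩
  have h_order (z : ℂ) : analyticOrderAt B z ≤ analyticOrderAt f z := by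
    by_cases hz : ∃ k ∈ s, z - a k ∈ lat τ
    · rw [(h_of_lat z hz).1, Order.one_le_iff_ne_zero]
      exact fun h ↦ (hf.1.analyticAt z).analyticOrderAt_eq_zero.1 h (h_of_lat z hz).2
    · exact (h_of_not_lat z hz).trans_le zero_le
  have hB_ne : B ≠ 0 := fun h ↦ by
    by_cases h_zero : ∃ k ∈ s, 0 - a k ∈ lat τ
    · simpa [h, analyticOrderAt_eq_top.2] using (h_of_lat 0 h_zero).1
    · simpa [h, analyticOrderAt_eq_top.2] using h_of_not_lat 0 h_zero
  obtain ⟨g, hg, rfl⟩ := exists_mem_thetaSpace_eq_mul hf hB hB_ne h_order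
  have hg_zero : g = 0 :=
    eq_zero_of_mem_thetaSpace hτ.ne' (U := -U) (mt neg_mem_lat_iff.1 hU) (by simpa using hg)
  rw [hg_zero, zero_mul]

theorem eq_sum_smul_thetaLagrangeBasis [DecidableEq ι] (hτ : 0 < τ.im) (hU : U ∉ lat τ)
    (ha : ∀ i ∈ s, ∀ j ∈ s, i ≠ j → a i - a j ∉ lat τ) {f : ℂ → ℂ}
    (hf : f ∈ twistedThetaSpace τ s a U) :
    f = ∑ i ∈ s, f (a i) • thetaLagrangeBasis τ s a U i := by
  refine sub_eq_zero.1 (eq_zero_of_mem_twistedThetaSpace hτ hU ha (sub_mem hf <| sum_mem fun i hi ↦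
    Submodule.smul_mem _ _ (thetaLagrangeBasis_mem_twistedThetaSpace hτ U a hi)) fun k hk ↦ ?_)
  have h_ne : ∀ i ∈ s, i ≠ k → f (a i) * thetaLagrangeBasis τ s a U i (a k) = 0 :=
    fun i _ hik ↦ by rw [thetaLagrangeBasis_of_ne hk hik, mul_zero]
  simp only [Pi.sub_apply, Finset.sum_apply, Pi.smul_apply, smul_eq_mul]
  rw [sum_eq_single_of_mem k hk h_ne, thetaLagrangeBasis_self hτ hU (ha k hk), mul_one, sub_self]

end Interpolation

section Addition

variable {ι : Type*} {τ : ℂ} {s : Finset ι} {w u : ι → ℂ}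

lemma prod_theta_add [DecidableEq ι] (hτ : 0 < τ.im) (hU : ∑ i ∈ s, u i ∉ lat τ)
    (hww : ∀ i ∈ s, ∀ j ∈ s, i ≠ j → w j - w i ∉ lat τ) :
    ∏ i ∈ s, theta τ (w i + u i) =
      ∑ i ∈ s, theta τ (u i) * (theta τ (w i + ∑ l ∈ s, u l) / theta τ (∑ l ∈ s, u l)) *
        ∏ j ∈ s.erase i, theta τ (w j - w i + u j) * (theta τ (w j) / theta τ (w j - w i)) := by
  have h_interp := congrFun (eq_sum_smul_thetaLagrangeBasis hτ hU (a := -w)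
    (fun i hi j hj hij ↦ by simpa [sub_eq_neg_add, add_comm] using hww i hi j hj hij)
    (prod_theta_mem_twistedThetaSpace hτ s (-w) u)) 0
  simp only [prod_apply, Finset.sum_apply, Pi.smul_apply, Pi.neg_apply, smul_eq_mul,
    thetaLagrangeBasis, neg_add_eq_sub, zero_add, sub_neg_eq_add] at h_interp
  rw [h_interp]
  refine sum_congr rfl fun i hi ↦ ?_
  rw [← mul_prod_erase s _ hi, sub_self, zero_add, prod_mul_distrib]
  ring

theorem phi_higher_addition_general [DecidableEq ι] (hτ : 0 < τ.im) (hw : ∀ i ∈ s, w i ∉ lat τ)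
    (hu : ∀ i ∈ s, u i ∉ lat τ) (hU : ∑ i ∈ s, u i ∉ lat τ)
    (hww : ∀ i ∈ s, ∀ j ∈ s, i ≠ j → w j - w i ∉ lat τ) :
    ∏ i ∈ s, phi τ (w i) (u i) = ∑ i ∈ s, phi τ (w i) (∑ l ∈ s, u l) *
      ∏ j ∈ s.erase i, phi τ (w j - w i) (u j) := by
  simp only [phi, div_eq_mul_inv, mul_right_comm _ (theta τ (w _ + u _)),
    prod_mul_distrib (f := fun i ↦ deriv (theta τ) 0 * (theta τ (w i) * theta τ (u i))⁻¹)]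
  rw [prod_theta_add hτ hU hww, mul_sum]
  refine sum_congr rfl fun i hi ↦ ?_
  rw [← mul_prod_erase s _ hi, mul_mul_mul_comm, ← prod_mul_distrib]
  congr 1
  · field_simp [theta_apply_ne_zero hτ (hw i hi), theta_apply_ne_zero hτ (hu i hi)]
  · refine prod_congr rfl fun j hj ↦ ?_
    field_simp [theta_apply_ne_zero hτ (hw j (mem_of_mem_erase hj))]

end Addition

/-- The higher-order addition formula for the Kronecker elliptic function
(relation (A.8)): `∏_{i=1}^n φ(w_i,u_i) = ∑_{i=1}^n φ(w_i, ∑_l u_l) ∏_{j≠i} φ(w_j−w_i, u_j)`. -/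
theorem phi_higher_addition
    (τ : ℂ) (hτ : 0 < τ.im) (n : ℕ) (hn : 1 ≤ n)
    (w u : Fin n → ℂ)
    (hw : ∀ i, w i ∉ lat τ) (hu : ∀ i, u i ∉ lat τ)
    (hU : (∑ l, u l) ∉ lat τ)
    (hww : ∀ i j : Fin n, i ≠ j → w j - w i ∉ lat τ) :
    ∏ i, phi τ (w i) (u i) =
      ∑ i, phi τ (w i) (∑ l, u l) * ∏ j ∈ univ.erase i, phi τ (w j - w i) (u j) :=
  phi_higher_addition_general hτ (fun i _ ↦ hw i) (fun i _ ↦ hu i) hU fun i _ j _ ↦ hww i j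

end
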